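/- Let A be a ring. The following conditions are equivalent: (i) A is a right Artinian right uniserial ring; (ii) the Laurent series ring A((x)) is a right Artinian right uniserial ring; (iii) A((x)) is a right uniserial ring. -/

import Mathlib

/-- A ring `A` is *right uniserial* (a right chain ring) if its right ideals, i.e. the
`Aᵐᵒᵖ`-submodules of `A`, are linearly ordered by inclusion. -/
def IsRightUniserialRing (A : Type*) [Ring A] : Prop :=
  ∀ I J : Submodule Aᵐᵒᵖ A, I ≤ J ∨ J ≤ I

/-! Each of the conditions is equivalent to the existence of a nilpotent `p : A` such that every
element of `A` is a unit or lies in `pA`. Every nonzero right ideal is then some `p ^ k A`, and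
`p` plays the same role in `A((x))`: a series outside `p A((x))` differs by a multiple of `p` from
a series whose nonzero coefficients are all units, and is therefore a unit.

Conversely, let `A((x))` be right uniserial. If `p₀A < p₁A < ⋯` were an infinite chain in `A`, then
of the series `∑ pᵢ x ^ nᵢ` and `∑ pᵢ x ^ mᵢ`, with both `nᵢ - mᵢ` and `mᵢ - nᵢ` unbounded, neither
would divide the other. So there is a largest `pA ≠ A`. Comparing `x - p` with `p` shows that
`x - p` is right invertible, and the coefficients of a right inverse are, up to a unit, the powers
of `p` in degrees tending to `-∞`; hence `p` is nilpotent. -/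

open HahnSeries

section Dvd

variable {A : Type*} [Semiring A]

theorem mem_span_mulOpposite_singleton {a b : A} : b ∈ Submodule.span Aᵐᵒᵖ {a} ↔ a ∣ b := by
  rw [Submodule.mem_span_singleton, MulOpposite.op_surjective.exists]
  simp only [op_smul_eq_mul, dvd_iff_exists_eq_mul_right, eq_comm]

theorem span_mulOpposite_singleton_le {a b : A} :
    Submodule.span Aᵐᵒᵖ {b} ≤ Submodule.span Aᵐᵒᵖ {a} ↔ a ∣ b := by
  rw [Submodule.span_singleton_le_iff_mem, mem_span_mulOpposite_singleton]

theorem rightIdeal_mem_of_dvd {I : Submodule Aᵐᵒᵖ A} {a b : A} (ha : a ∈ I) (h : a ∣ b) : b ∈ I :=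
  (Submodule.span_singleton_le_iff_mem a I).2 ha (mem_span_mulOpposite_singleton.2 h)

theorem isRightUniserialRing_iff_dvd {A : Type*} [Ring A] :
    IsRightUniserialRing A ↔ ∀ a b : A, a ∣ b ∨ b ∣ a := by
  refine ⟨fun h a b ↦ ?_, fun h I J ↦ ?_⟩
  · simpa only [span_mulOpposite_singleton_le] using
      h (Submodule.span Aᵐᵒᵖ {b}) (Submodule.span Aᵐᵒᵖ {a})
  · by_contra! hIJ
    obtain ⟨a, haI, haJ⟩ := SetLike.not_le_iff_exists.1 hIJ.1
    obtain ⟨b, hbJ, hbI⟩ := SetLike.not_le_iff_exists.1 hIJ.2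
    rcases h a b with hab | hba
    · exact hbI (rightIdeal_mem_of_dvd haI hab)
    · exact haJ (rightIdeal_mem_of_dvd hbJ hba)

end Dvd

theorem pow_dvd_mul_pow_of_forall_dvd_mul {M : Type*} [Monoid M] {p : M} (h : ∀ a, p ∣ a * p)
    (a : M) (n : ℕ) : p ^ n ∣ (p * a) ^ n := by
  induction n with
  | zero => simp
  | succ n ih =>
    obtain ⟨b, hb⟩ := ih
    obtain ⟨c, hc⟩ := h b
    refine ⟨c * a, ?_⟩
    calc (p * a) ^ (n + 1) = p ^ n * (b * p) * a := by rw [pow_succ, hb]; simp only [mul_assoc]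
      _ = p ^ (n + 1) * (c * a) := by rw [hc, pow_succ]; simp only [mul_assoc]

/-- An element `p` is a *nilpotent uniformizer* if it is nilpotent and `pA` contains every nonunit.
In the zero ring, `0` is one. -/
structure IsNilpotentUniformizer {A : Type*} [Ring A] (p : A) : Prop where
  isNilpotent : IsNilpotent p
  isUnit_or_dvd (a : A) : IsUnit a ∨ p ∣ a

namespace IsNilpotentUniformizer

variable {A : Type*} [Ring A] {p : A}

theorem zero_of_subsingleton [Subsingleton A] : IsNilpotentUniformizer (0 : A) :=
  ⟨.zero, fun a ↦ .inl (isUnit_of_subsingleton a)⟩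

theorem exists_eq_pow_mul_unit (hp : IsNilpotentUniformizer p) (a : A) :
    ∃ (k : ℕ) (u : Aˣ), a = p ^ k * u := by
  have hpow (n : ℕ) : p ^ n ∣ a ∨ ∃ (k : ℕ) (u : Aˣ), a = p ^ k * u := by
    induction n with
    | zero => simp
    | succ n ih =>
      rcases ih with ⟨b, rfl⟩ | h
      · rcases hp.isUnit_or_dvd b with ⟨u, rfl⟩ | hb
        · exact Or.inr ⟨n, u, rfl⟩
        · exact Or.inl (pow_succ p n ▸ mul_dvd_mul_left _ hb)
      · exact Or.inr h
  obtain ⟨n, hn⟩ := hp.isNilpotent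
  rcases hpow n with h | h
  · exact ⟨n, 1, by simpa [hn] using h⟩
  · exact h

theorem exists_rightIdeal_eq_span_pow (hp : IsNilpotentUniformizer p) (I : Submodule Aᵐᵒᵖ A) :
    ∃ k ≤ nilpotencyClass p, I = Submodule.span Aᵐᵒᵖ {p ^ k} := by
  classical
  have hI : p ^ nilpotencyClass p ∈ I := by
    rw [pow_nilpotencyClass hp.isNilpotent]
    exact I.zero_mem
  have hex : ∃ k, p ^ k ∈ I := ⟨_, hI⟩
  refine ⟨Nat.find hex, Nat.find_min' hex hI, le_antisymm (fun a ha ↦ ?_) ?_⟩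
  · obtain ⟨m, u, rfl⟩ := hp.exists_eq_pow_mul_unit a
    have hm : p ^ m ∈ I := rightIdeal_mem_of_dvd ha (Units.mul_right_dvd.2 dvd_rfl)
    rw [mem_span_mulOpposite_singleton]
    exact (pow_dvd_pow p (Nat.find_min' hex hm)).mul_right _
  · rw [Submodule.span_singleton_le_iff_mem]
    exact Nat.find_spec hex

theorem isRightUniserialRing (hp : IsNilpotentUniformizer p) : IsRightUniserialRing A := by
  intro I J
  obtain ⟨k, -, rfl⟩ := hp.exists_rightIdeal_eq_span_pow I
  obtain ⟨l, -, rfl⟩ := hp.exists_rightIdeal_eq_span_pow J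
  simp only [span_mulOpposite_singleton_le]
  exact (le_total l k).imp (pow_dvd_pow p) (pow_dvd_pow p)

theorem isArtinian (hp : IsNilpotentUniformizer p) : IsArtinian Aᵐᵒᵖ A := by
  have : Finite (Submodule Aᵐᵒᵖ A) := by
    refine Finite.of_surjective
      (fun k : Fin (nilpotencyClass p + 1) ↦ Submodule.span Aᵐᵒᵖ {p ^ (k : ℕ)}) fun I ↦ ?_
    obtain ⟨k, hk, rfl⟩ := hp.exists_rightIdeal_eq_span_pow I
    exact ⟨⟨k, Nat.lt_succ_of_le hk⟩, rfl⟩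
  infer_instance

theorem dvd_mul_self (hp : IsNilpotentUniformizer p) (a : A) : p ∣ a * p := by
  refine (hp.isUnit_or_dvd (a * p)).elim (fun hu ↦ ?_) id
  obtain ⟨b, hb⟩ := hu.exists_left_inv
  obtain ⟨n, hn⟩ := hp.isNilpotent
  have hone : (1 : A) = 0 := by
    rw [← pow_mul_pow_eq_one n ((mul_assoc b a p).trans hb), hn, mul_zero]
  have := subsingleton_of_zero_eq_one hone.symm
  exact ⟨0, Subsingleton.elim _ _⟩

end IsNilpotentUniformizer

section HahnSeries

variable {Γ A : Type*}

theorem hahnSeries_C_dvd_iff [AddCommMonoid Γ] [PartialOrder Γ] [IsOrderedCancelAddMonoid Γ]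
    [Semiring A] {p : A} {f : HahnSeries Γ A} : C p ∣ f ↔ ∀ i, p ∣ f.coeff i := by
  constructor
  · rintro ⟨g, rfl⟩ i
    exact ⟨g.coeff i, coeff_single_zero_mul⟩
  · intro h
    have hquot (a : A) : ∃ b, (a = 0 → b = 0) ∧ (p ∣ a → a = p * b) := by
      by_cases ha : a = 0
      · exact ⟨0, fun _ ↦ rfl, fun _ ↦ by rw [ha, mul_zero]⟩
      · by_cases hpa : p ∣ a
        · exact hpa.imp fun b hb ↦ ⟨fun h0 ↦ (ha h0).elim, fun _ ↦ hb⟩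
        · exact ⟨0, fun _ ↦ rfl, fun h' ↦ (hpa h').elim⟩
    choose q hq_zero hq using hquot
    refine ⟨f.map (⟨q, hq_zero 0 rfl⟩ : ZeroHom A A), HahnSeries.ext (funext fun i ↦ ?_)⟩
    rw [C_apply, coeff_single_zero_mul]
    exact hq _ (h i)

theorem exists_C_dvd_sub_forall_not_dvd_coeff [AddCommMonoid Γ] [PartialOrder Γ]
    [IsOrderedCancelAddMonoid Γ] [Ring A] (p : A) (f : HahnSeries Γ A) :
    ∃ g : HahnSeries Γ A, C p ∣ f - g ∧ ∀ i, g.coeff i ≠ 0 → ¬ p ∣ g.coeff i := by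
  classical
  let residue : ZeroHom A A := ⟨fun a ↦ if p ∣ a then 0 else a, by simp⟩
  have hcoeff (i : Γ) : (f.map residue).coeff i = if p ∣ f.coeff i then 0 else f.coeff i := rfl
  refine ⟨f.map residue, hahnSeries_C_dvd_iff.2 fun i ↦ ?_, fun i ↦ ?_⟩
  · rw [coeff_sub, hcoeff]
    split_ifs with h <;> simp [h]
  · rw [hcoeff]
    split_ifs with h <;> simp [h]

end HahnSeries

section LaurentSeries

variable {A : Type*} [Ring A]

theorem isUnit_laurentSeries_single_one (n : ℤ) : IsUnit (single n 1 : LaurentSeries A) :=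
  ⟨⟨single n 1, single (-n) 1, by simp, by simp⟩, rfl⟩

theorem laurentSeries_isUnit_of_isUnit_leadingCoeff {f : LaurentSeries A}
    (hf : IsUnit f.leadingCoeff) : IsUnit f := by
  have hpart : IsUnit f.powerSeriesPart := by
    rw [PowerSeries.isUnit_iff_constantCoeff, ← PowerSeries.coeff_zero_eq_constantCoeff_apply]
    simpa [leadingCoeff_eq] using hf
  rw [← f.single_order_mul_powerSeriesPart]
  exact (isUnit_laurentSeries_single_one f.order).mul (hpart.map (ofPowerSeries ℤ A))

theorem IsNilpotentUniformizer.laurentSeries_C {p : A} (hp : IsNilpotentUniformizer p) :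
    IsNilpotentUniformizer (C p : LaurentSeries A) := by
  have hnil : IsNilpotent (C p : LaurentSeries A) := hp.isNilpotent.map _
  have hnormal (f : LaurentSeries A) : C p ∣ f * C p := by
    refine hahnSeries_C_dvd_iff.2 fun i ↦ ?_
    rw [C_apply, coeff_mul_single_zero]
    exact hp.dvd_mul_self _
  have hnil_mul (f : LaurentSeries A) : IsNilpotent (C p * f) := by
    obtain ⟨n, hn⟩ := hnil
    exact ⟨n, zero_dvd_iff.1 (hn ▸ pow_dvd_mul_pow_of_forall_dvd_mul hnormal f n)⟩
  refine ⟨hnil, fun f ↦ ?_⟩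
  obtain ⟨g, ⟨d, hd⟩, hg⟩ := exists_C_dvd_sub_forall_not_dvd_coeff p f
  rcases eq_or_ne g 0 with rfl | hg0
  · exact Or.inr ⟨d, by rw [← hd, sub_zero]⟩
  · left
    have hlead : IsUnit g.leadingCoeff := by
      have hne := leadingCoeff_ne_zero.2 hg0
      rw [leadingCoeff_eq] at hne ⊢
      exact (hp.isUnit_or_dvd _).resolve_right (hg _ hne)
    obtain ⟨u, rfl⟩ := laurentSeries_isUnit_of_isUnit_leadingCoeff hlead
    have hfactor : f = (C p * (d * u⁻¹.val) + 1) * u.val := by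
      rw [add_mul, one_mul, ← mul_assoc, Units.inv_mul_cancel_right, ← hd, sub_add_cancel]
    rw [hfactor]
    exact (hnil_mul _).isUnit_add_one.mul u.isUnit

end LaurentSeries

/-- The ascending chain condition on principal right ideals; `a ∣ b` says that `b ∈ aA`. -/
def HasRightACCP (A : Type*) [Monoid A] : Prop :=
  WellFounded fun a b : A ↦ a ∣ b ∧ ¬ b ∣ a

section Uniformizer

variable {A : Type*} [Ring A]

theorem hasRightACCP_of_isNoetherian [IsNoetherian Aᵐᵒᵖ A] : HasRightACCP A := by
  refine Subrelation.wf (fun {a b} hab ↦ ?_) (InvImage.wf (fun a : A ↦ Submodule.span Aᵐᵒᵖ {a})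
    (wellFounded_gt (α := Submodule Aᵐᵒᵖ A)))
  simpa only [InvImage, gt_iff_lt, lt_iff_le_not_ge, span_mulOpposite_singleton_le] using hab

theorem isNoetherian_mulOpposite_of_isArtinian [IsArtinian Aᵐᵒᵖ A] : IsNoetherian Aᵐᵒᵖ A :=
  have : IsArtinianRing Aᵐᵒᵖ :=
    (MulOpposite.opLinearEquiv Aᵐᵒᵖ (M := A)).isArtinian_iff.1 inferInstance
  IsSemiprimaryRing.isNoetherian_iff_isArtinian.2 inferInstance

theorem isNilpotent_of_forall_isUnit_mul_add_one [IsArtinian Aᵐᵒᵖ A] {p : A}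
    (hp : ∀ a, IsUnit (p * a + 1)) : IsNilpotent p := by
  obtain ⟨_, ⟨n, rfl⟩, hmin⟩ := (wellFounded_lt (α := Submodule Aᵐᵒᵖ A)).has_min
    (Set.range fun n ↦ Submodule.span Aᵐᵒᵖ {p ^ n}) (Set.range_nonempty _)
  have hdvd : p ^ (n + 1) ∣ p ^ n := by
    have := hmin _ ⟨n + 1, rfl⟩
    rw [lt_iff_le_not_ge, span_mulOpposite_singleton_le, span_mulOpposite_singleton_le] at this
    exact not_not.1 fun h ↦ this ⟨pow_dvd_pow p n.le_succ, h⟩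
  obtain ⟨c, hc⟩ := hdvd
  have hzero : p ^ n * (p * -c + 1) = 0 := by
    rw [mul_add, ← mul_assoc, ← pow_succ, mul_neg, ← hc, mul_one, neg_add_cancel]
  exact ⟨n, (hp (-c)).mul_left_eq_zero.1 hzero⟩

namespace IsRightUniserialRing

theorem isDedekindFiniteMonoid (hA : IsRightUniserialRing A) : IsDedekindFiniteMonoid A where
  mul_eq_one_symm {a b} hab := by
    have hcompl : a * (1 - b * a) = 0 := by
      rw [mul_sub, ← mul_assoc, hab, one_mul, mul_one, sub_self]
    rcases isRightUniserialRing_iff_dvd.1 hA b (1 - b * a) with ⟨c, hc⟩ | ⟨c, hc⟩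
    · have hc0 : c = 0 := by rw [← one_mul c, ← hab, mul_assoc, ← hc, hcompl]
      rw [hc0, mul_zero, sub_eq_zero] at hc
      exact hc.symm
    · have hone : (1 : A) = 0 := by rw [← hab, hc, ← mul_assoc, hcompl, zero_mul]
      exact eq_of_zero_eq_one hone.symm _ _

theorem isUnit_of_dvd_one (hA : IsRightUniserialRing A) {a : A} (ha : a ∣ 1) : IsUnit a := by
  have := hA.isDedekindFiniteMonoid
  obtain ⟨b, hb⟩ := ha
  exact .of_mul_eq_one b hb.symm

theorem isUnit_mul_add_one (hA : IsRightUniserialRing A) {p : A} (hp : ¬ IsUnit p)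
    (hdvd : ∀ a, IsUnit a ∨ p ∣ a) (a : A) : IsUnit (p * a + 1) := by
  refine (hdvd _).resolve_right fun h ↦ hp (hA.isUnit_of_dvd_one ?_)
  exact (dvd_add_right (dvd_mul_right p a)).1 h

theorem exists_not_isUnit_forall_isUnit_or_dvd [Nontrivial A] (hA : IsRightUniserialRing A)
    (hacc : HasRightACCP A) : ∃ p : A, ¬ IsUnit p ∧ ∀ a, IsUnit a ∨ p ∣ a := by
  obtain ⟨p, hp, hmax⟩ := hacc.has_min {a | ¬ IsUnit a} ⟨0, not_isUnit_zero⟩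
  refine ⟨p, hp, fun a ↦ or_iff_not_imp_left.2 fun ha ↦ ?_⟩
  by_contra hpa
  exact hmax a ha ⟨(isRightUniserialRing_iff_dvd.1 hA p a).resolve_left hpa, hpa⟩

theorem exists_isNilpotentUniformizer_of_isArtinian [IsArtinian Aᵐᵒᵖ A]
    (hA : IsRightUniserialRing A) : ∃ p : A, IsNilpotentUniformizer p := by
  rcases subsingleton_or_nontrivial A with _ | _
  · exact ⟨0, .zero_of_subsingleton⟩
  have := isNoetherian_mulOpposite_of_isArtinian (A := A)
  obtain ⟨p, hp, hdvd⟩ :=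
    hA.exists_not_isUnit_forall_isUnit_or_dvd hasRightACCP_of_isNoetherian
  exact ⟨p, isNilpotent_of_forall_isUnit_mul_add_one (hA.isUnit_mul_add_one hp hdvd), hdvd⟩

end IsRightUniserialRing

end Uniformizer

section SparseSeries

variable {Γ A : Type*} [Semiring A]

/-- The series `∑ pᵢ x ^ (N i)`, for a strictly increasing sequence `N` of exponents. -/
noncomputable def sparseSeries [PartialOrder Γ] (N : ℕ ↪o Γ) (p : ℕ → A) :
    HahnSeries Γ A :=
  embDomain N (toPowerSeries.symm (PowerSeries.mk p))

theorem coeff_sparseSeries [PartialOrder Γ] (N : ℕ ↪o Γ) (p : ℕ → A) (i : ℕ) :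
    (sparseSeries N p).coeff (N i) = p i := by
  rw [sparseSeries, embDomain_coeff, coeff_toPowerSeries_symm, PowerSeries.coeff_mk]

theorem exists_eq_of_coeff_sparseSeries_ne_zero [PartialOrder Γ] {N : ℕ ↪o Γ}
    {p : ℕ → A} {j : Γ} (h : (sparseSeries N p).coeff j ≠ 0) : ∃ i, N i = j :=
  not_not.1 (mt embDomain_of_notMem_range h)

theorem dvd_coeff_sparseSeries_mul [AddCommGroup Γ] [LinearOrder Γ] [IsOrderedAddMonoid Γ]
    {N : ℕ ↪o Γ} {p : ℕ → A} {i : ℕ} (hp : ∀ l ≤ i, p i ∣ p l) {h : HahnSeries Γ A}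
    {j : Γ} (hj : j < N (i + 1) + h.order) : p i ∣ (sparseSeries N p * h).coeff j := by
  rw [coeff_mul]
  refine Finset.dvd_sum fun ⟨k, m⟩ hkm ↦ ?_
  obtain ⟨hk, hm, rfl⟩ := Finset.mem_antidiagonal.1 hkm
  obtain ⟨l, rfl⟩ := exists_eq_of_coeff_sparseSeries_ne_zero hk
  have hl : l < i + 1 := N.lt_iff_lt.1 <| lt_of_add_lt_add_right <|
    (add_le_add_right (order_le_of_coeff_ne_zero hm) (N l)).trans_lt hj
  rw [coeff_sparseSeries]
  exact (hp l (Nat.le_of_lt_succ hl)).mul_right _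

theorem exists_forall_add_le_of_sparseSeries_dvd [AddCommGroup Γ] [LinearOrder Γ]
    [IsOrderedAddMonoid Γ] {N M : ℕ ↪o Γ} {p : ℕ → A}
    (hp : ∀ i, p (i + 1) ∣ p i ∧ ¬ p i ∣ p (i + 1))
    (hdvd : sparseSeries N p ∣ sparseSeries M p) : ∃ d, ∀ i, N i + d ≤ M i := by
  have hchain {l i : ℕ} (hl : l ≤ i) : p i ∣ p l := by
    induction hl with
    | refl => exact dvd_rfl
    | step _ ih => exact (hp _).1.trans ih
  obtain ⟨h, hh⟩ := hdvd
  refine ⟨min h.order (M 0 - N 0), fun i ↦ ?_⟩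
  cases i with
  | zero => exact (add_le_add_right (min_le_right _ _) _).trans_eq (add_sub_cancel _ _)
  | succ i =>
    refine (add_le_add_right (min_le_left _ _) _).trans (not_lt.1 fun hlt ↦ (hp i).2 ?_)
    rw [← coeff_sparseSeries M p (i + 1), hh]
    exact dvd_coeff_sparseSeries_mul (fun _ ↦ hchain) hlt

theorem strictMono_two_mul_sq_add {s : ℕ → ℤ} (hs : ∀ i, |s i| ≤ i) :
    StrictMono fun i : ℕ ↦ 2 * (i : ℤ) ^ 2 + s i := by
  refine strictMono_nat_of_lt_succ fun i ↦ ?_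
  have h₀ := abs_le.1 (hs i)
  have h₁ := abs_le.1 (hs (i + 1))
  push_cast at h₁ ⊢
  linarith

theorem exists_orderEmbedding_sub_unbounded : ∃ N M : ℕ ↪o ℤ,
    (∀ d, ∃ i, M i < N i + d) ∧ ∀ d, ∃ i, N i < M i + d := by
  let s (i : ℕ) : ℤ := (-1) ^ i * i
  have hs (i : ℕ) : |s i| ≤ i := by simp [s, abs_mul]
  have hs_neg (i : ℕ) : |(-s) i| ≤ i := (abs_neg (s i)).trans_le (hs i)
  let N := OrderEmbedding.ofStrictMono _ (strictMono_two_mul_sq_add hs)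
  let M := OrderEmbedding.ofStrictMono _ (strictMono_two_mul_sq_add hs_neg)
  have hsub (i : ℕ) : N i - M i = 2 * s i := by
    change (2 * (i : ℤ) ^ 2 + s i) - (2 * (i : ℤ) ^ 2 + -s i) = 2 * s i
    ring
  refine ⟨N, M, fun d ↦ ?_, fun d ↦ ?_⟩ <;> obtain ⟨n, hn⟩ := exists_nat_gt (-d)
  · have hs_even : s (2 * n) = 2 * n := by simp [s]
    have := hsub (2 * n)
    exact ⟨2 * n, by omega⟩
  · have hs_odd : s (2 * n + 1) = -(2 * n + 1) := by simp [s, pow_succ]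
    have := hsub (2 * n + 1)
    exact ⟨2 * n + 1, by omega⟩

end SparseSeries

section Descent

variable {A : Type*} [Ring A]

theorem isRightUniserialRing_of_laurentSeries (hA : IsRightUniserialRing (LaurentSeries A)) :
    IsRightUniserialRing A := by
  have dvd_of_C_dvd {a b : A} (h : (C a : LaurentSeries A) ∣ C b) : a ∣ b := by
    simpa using hahnSeries_C_dvd_iff.1 h 0
  rw [isRightUniserialRing_iff_dvd] at hA ⊢
  exact fun a b ↦ (hA (C a) (C b)).imp dvd_of_C_dvd dvd_of_C_dvd

theorem hasRightACCP_of_isRightUniserialRing_laurentSeries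
    (hA : IsRightUniserialRing (LaurentSeries A)) : HasRightACCP A := by
  refine wellFounded_iff_isEmpty_descending_chain.2 ⟨fun ⟨p, hp⟩ ↦ ?_⟩
  obtain ⟨N, M, hNM, hMN⟩ := exists_orderEmbedding_sub_unbounded
  rcases isRightUniserialRing_iff_dvd.1 hA (sparseSeries N p) (sparseSeries M p) with h | h
  · obtain ⟨d, hd⟩ := exists_forall_add_le_of_sparseSeries_dvd hp h
    obtain ⟨i, hi⟩ := hNM d
    exact hi.not_ge (hd i)
  · obtain ⟨d, hd⟩ := exists_forall_add_le_of_sparseSeries_dvd hp h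
    obtain ⟨i, hi⟩ := hMN d
    exact hi.not_ge (hd i)

theorem coeff_single_one_sub_C_mul (p : A) (h : LaurentSeries A) (i : ℤ) :
    ((single 1 1 - C p) * h).coeff i = h.coeff (i - 1) - p * h.coeff i := by
  rw [sub_mul, coeff_sub, coeff_single_mul, one_mul, C_apply, coeff_single_zero_mul]

theorem isNilpotent_of_single_one_sub_C_dvd_one {p : A} (hp : ∀ a, IsUnit (p * a + 1))
    (hdvd : (single 1 1 - C p : LaurentSeries A) ∣ 1) : IsNilpotent p := by
  obtain ⟨h, hh⟩ := hdvd
  have hcoeff (i : ℤ) : h.coeff (i - 1) = p * h.coeff i + (1 : LaurentSeries A).coeff i := by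
    rw [hh, coeff_single_one_sub_C_mul, add_sub_cancel]
  have hunit : IsUnit (h.coeff (-1)) := by
    have hcoeff_zero := hcoeff 0
    rw [zero_sub, coeff_one, if_pos rfl] at hcoeff_zero
    exact hcoeff_zero ▸ hp (h.coeff 0)
  have hpow (n : ℕ) : h.coeff (-1 - n) = p ^ n * h.coeff (-1) := by
    induction n with
    | zero => simp
    | succ n ih =>
      have hne : (-1 - n : ℤ) ≠ 0 := by omega
      rw [Nat.cast_succ, ← sub_sub, hcoeff, coeff_one, if_neg hne, add_zero, ih, pow_succ',
        mul_assoc]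
  refine ⟨h.order.natAbs, hunit.mul_left_eq_zero.1 ?_⟩
  rw [← hpow, coeff_eq_zero_of_lt_order (by omega)]

theorem single_one_sub_C_dvd_one {p : A} (hA : IsRightUniserialRing (LaurentSeries A))
    (hp : ¬ p ∣ 1) : (single 1 1 - C p : LaurentSeries A) ∣ 1 := by
  have hnot : ¬ (C p : LaurentSeries A) ∣ single 1 1 - C p := fun h ↦
    hp (by simpa [C_apply, coeff_single_of_ne] using hahnSeries_C_dvd_iff.1 h 1)
  have hdvd_C := (isRightUniserialRing_iff_dvd.1 hA _ _).resolve_left hnot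
  have hdvd_X : (single 1 1 - C p : LaurentSeries A) ∣ single 1 1 := by
    simpa using dvd_add dvd_rfl hdvd_C
  obtain ⟨u, hu⟩ := isUnit_laurentSeries_single_one (A := A) 1
  exact hdvd_X.trans ⟨↑u⁻¹, by rw [← hu, u.mul_inv]⟩

theorem exists_isNilpotentUniformizer_of_isRightUniserialRing_laurentSeries
    (hL : IsRightUniserialRing (LaurentSeries A)) : ∃ p : A, IsNilpotentUniformizer p := by
  rcases subsingleton_or_nontrivial A with _ | _
  · exact ⟨0, .zero_of_subsingleton⟩
  have hA := isRightUniserialRing_of_laurentSeries hL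
  obtain ⟨p, hp, hdvd⟩ := hA.exists_not_isUnit_forall_isUnit_or_dvd
    (hasRightACCP_of_isRightUniserialRing_laurentSeries hL)
  have hX := single_one_sub_C_dvd_one hL (mt hA.isUnit_of_dvd_one hp)
  exact ⟨p, isNilpotent_of_single_one_sub_C_dvd_one (hA.isUnit_mul_add_one hp hdvd) hX, hdvd⟩

end Descent

/-- The following are equivalent: (i) `A` is a right Artinian right uniserial ring;
(ii) the Laurent series ring `A((x))` is a right Artinian right uniserial ring;
(iii) `A((x))` is a right uniserial ring. -/
theorem stmt13 (A : Type*) [Ring A] :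
    [IsArtinian Aᵐᵒᵖ A ∧ IsRightUniserialRing A,
     IsArtinian (LaurentSeries A)ᵐᵒᵖ (LaurentSeries A) ∧
       IsRightUniserialRing (LaurentSeries A),
     IsRightUniserialRing (LaurentSeries A)].TFAE := by
  tfae_have 1 → 2 := by
    rintro ⟨_, hA⟩
    obtain ⟨p, hp⟩ := hA.exists_isNilpotentUniformizer_of_isArtinian
    exact ⟨hp.laurentSeries_C.isArtinian, hp.laurentSeries_C.isRightUniserialRing⟩
  tfae_have 2 → 3 := And.right
  tfae_have 3 → 1 := by
    intro hL
    obtain ⟨p, hp⟩ := exists_isNilpotentUniformizer_of_isRightUniserialRing_laurentSeries hL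
    exact ⟨hp.isArtinian, hp.isRightUniserialRing⟩
  tfae_finish
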